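/- Let X be a proper metric space (every closed bounded subset of X is compact), p ∈ X, and Γ a pointwise-sequentially closed subgroup of the group of isometric equivalences of X. Then for every a > 0 there exists ε > 0 such that 𝒢(Γ, p, a) = 𝒢(Γ, p, a + ε). -/

import Mathlib

/-- `𝒢(Γ, p, r)`: the subgroup generated by the elements of `Γ` moving `p` a
distance at most `r`. -/
def genBelow {X : Type*} [MetricSpace X] (Γ : Subgroup (X ≃ᵢ X)) (p : X) (r : ℝ) :
    Subgroup (X ≃ᵢ X) :=
  Subgroup.closure {g : X ≃ᵢ X | g ∈ Γ ∧ dist (g p) p ≤ r}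

open Filter Topology in
lemma exists_subseq_lim {X : Type*} [MetricSpace X] [ProperSpace X] (p : X) (C : ℝ)
    (f : ℕ → (X ≃ᵢ X)) (hf : ∀ n, dist (f n p) p ≤ C) :
    ∃ φ : ℕ → ℕ, StrictMono φ ∧ ∀ x, ∃ y, Tendsto (fun n => f (φ n) x) atTop (𝓝 y) := by
  have : Nonempty X := ⟨p⟩
  let d := TopologicalSpace.denseSeq X
  have hK : IsCompact (Set.pi Set.univ (fun k => Metric.closedBall p (dist (d k) p + C))) :=
    isCompact_univ_pi (fun k => isCompact_closedBall _ _)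
  obtain ⟨z, -, φ, hφ, hz⟩ := hK.tendsto_subseq (x := fun n k => f n (d k)) (by
    intro n k _
    rw [Metric.mem_closedBall]
    calc dist (f n (d k)) p ≤ dist (f n (d k)) (f n p) + dist (f n p) p := dist_triangle _ _ _
      _ ≤ _ := by rw [(f n).dist_eq]; linarith [hf n])
  rw [tendsto_pi_nhds] at hz
  refine ⟨φ, hφ, fun x => cauchySeq_tendsto_of_complete ?_⟩
  rw [Metric.cauchySeq_iff]
  intro ε hε
  obtain ⟨k, hk⟩ := (TopologicalSpace.denseRange_denseSeq X).exists_dist_lt x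
    (show 0 < ε / 3 by positivity)
  obtain ⟨N, hN⟩ := Metric.cauchySeq_iff.1 (hz k).cauchySeq (ε / 3) (by positivity)
  refine ⟨N, fun m hm n hn => ?_⟩
  have h1 := hN m hm n hn
  simp only [Function.comp] at h1
  have h2 := dist_triangle4 (f (φ m) x) (f (φ m) (d k)) (f (φ n) (d k)) (f (φ n) x)
  rw [(f (φ m)).dist_eq, (f (φ n)).dist_eq, dist_comm (d k) x] at h2
  change dist x (d k) < _ at hk
  linarith

open Filter Topology in
theorem gen_stabilizes (X : Type*) [MetricSpace X] [ProperSpace X] (p : X)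
    (Γ : Subgroup (X ≃ᵢ X))
    (hclosed : ∀ g : ℕ → (X ≃ᵢ X), (∀ n, g n ∈ Γ) → ∀ h : X ≃ᵢ X,
      (∀ x : X, Filter.Tendsto (fun n => g n x) Filter.atTop (nhds (h x))) →
      h ∈ Γ) :
    ∀ a : ℝ, 0 < a → ∃ ε : ℝ, 0 < ε ∧ genBelow Γ p a = genBelow Γ p (a + ε) := by
  intro a ha
  by_contra! hne
  have hex : ∀ n : ℕ, ∃ g : X ≃ᵢ X, g ∈ Γ ∧ dist (g p) p ≤ a + 1 / ((n : ℝ) + 1) ∧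
      g ∉ genBelow Γ p a := by
    intro n
    by_contra! hc
    refine hne (1 / ((n : ℝ) + 1)) (by positivity) (le_antisymm ?_ ?_)
    · refine Subgroup.closure_mono fun g hg => ⟨hg.1, hg.2.trans ?_⟩
      have : 0 < 1 / ((n : ℝ) + 1) := by positivity
      linarith
    · exact (Subgroup.closure_le _).2 fun g hg => hc g hg.1 hg.2
  choose g hgΓ hgd hgn using hex
  have hb : ∀ n, dist (g n p) p ≤ a + 1 := fun n => (hgd n).trans (by
    have : 1 / ((n : ℝ) + 1) ≤ 1 := by
      rw [div_le_one (by positivity)]; linarith [Nat.cast_nonneg (α := ℝ) n]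
    linarith)
  obtain ⟨φ, hφ, h1⟩ := exists_subseq_lim p (a + 1) g hb
  obtain ⟨ψ, hψ, h2⟩ := exists_subseq_lim p (a + 1) (fun n => (g (φ n)).symm) (by
    intro n
    rw [← (g (φ n)).dist_eq, IsometryEquiv.apply_symm_apply, dist_comm]
    exact hb _)
  choose u hu using h1
  choose v hv using h2
  have hu : ∀ x, Tendsto (fun n => g (φ (ψ n)) x) atTop (𝓝 (u x)) :=
    fun x => (hu x).comp hψ.tendsto_atTop
  have huv : ∀ x, u (v x) = x := by
    intro x
    refine tendsto_nhds_unique (hu (v x)) ?_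
    rw [tendsto_iff_dist_tendsto_zero]
    have := tendsto_iff_dist_tendsto_zero.1 (hv x)
    refine this.congr fun n => ?_
    rw [← (g (φ (ψ n))).dist_eq, IsometryEquiv.apply_symm_apply, dist_comm]
  have hiso : Isometry u := Isometry.of_dist_eq fun x y =>
    tendsto_nhds_unique ((hu x).dist (hu y)) (by simp [IsometryEquiv.dist_eq])
  let h : X ≃ᵢ X := IsometryEquiv.mk' u v huv hiso
  have hh : ∀ x, h x = u x := fun _ => rfl
  have hΓ : h ∈ Γ := hclosed (fun n => g (φ (ψ n))) (fun n => hgΓ _) h hu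
  have hd : dist (h p) p ≤ a := by
    have l1 : Tendsto (fun n => dist (g (φ (ψ n)) p) p) atTop (𝓝 (dist (h p) p)) :=
      (hu p).dist tendsto_const_nhds
    have l2 : Tendsto (fun n : ℕ => a + 1 / ((φ (ψ n) : ℝ) + 1)) atTop (𝓝 (a + 0)) :=
      tendsto_const_nhds.add
        ((tendsto_one_div_add_atTop_nhds_zero_nat (𝕜 := ℝ)).comp
          (hφ.comp hψ).tendsto_atTop)
    rw [add_zero] at l2
    exact le_of_tendsto_of_tendsto' l1 l2 fun n => hgd _
  have hmem : h ∈ genBelow Γ p a := Subgroup.subset_closure ⟨hΓ, hd⟩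
  obtain ⟨n, hn⟩ := ((Metric.tendsto_nhds.1 (hu p)) a ha).exists
  refine hgn (φ (ψ n)) ?_
  have hk : h⁻¹ * g (φ (ψ n)) ∈ genBelow Γ p a := by
    refine Subgroup.subset_closure ⟨Γ.mul_mem (Γ.inv_mem hΓ) (hgΓ _), ?_⟩
    rw [← h.dist_eq, IsometryEquiv.mul_apply, IsometryEquiv.apply_inv_self]
    exact hn.le
  simpa using (genBelow Γ p a).mul_mem hmem hk
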